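/- arXiv:2604.05417 — 2 statements merged into one kernel-verified Lean document; each statement's English description precedes it below -/
import Mathlib

section
/- Let n ≥ 1 be a natural number and let 0 < x < y < 1. If h_n(y) ≥ g_n(y)^2 / (4·n·y), then y·(1 − (2n+1)y^n + (2n+1)y^{n+1} − y^{2n+1}) / ((1 − y)^2 · (f_n(y) − f_n(x))^2) ≥ 1 / (4·n·(y − x)^2), where f_n(t) = Σ_{s=1}^{n} t^s, g_n(t) = Σ_{s=1}^{n} s·t^{s−1}, and h_n(t) = Σ_{s=1}^{n} s·(t^{s−1} − t^{2n−s}). -/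
/-!
Since `|y ^ s - x ^ s| ≤ s * y ^ (s - 1) * |y - x|` whenever `|x| ≤ y`, summing over `s` gives
`|f_n(y) - f_n(x)| ≤ g_n(y) * |y - x|`, and the hypothesis is what turns the square of this into
`(f_n(y) - f_n(x))² ≤ 4 n y h_n(y) (y - x)²`. The polynomial in the theorem is `(1 - y)² h_n(y)`:
both halves of `h_n` are cases of the homogeneous sum `∑ s * a ^ (s - 1) * b ^ (n - s)`, with
`(a, b) = (y, 1)` and, after extracting `y ^ n`, with `(a, b) = (1, y)`.
-/

/-- The geometric sum `f_n(t)` from `s = 1`, whose increments enter the feedback signal. -/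
def powSum {R : Type*} [Semiring R] (n : ℕ) (t : R) : R := ∑ s ∈ Finset.Icc 1 n, t ^ s

/-- The formal derivative `g_n(t)` of `powSum n`, used to bound the increments of `powSum n`. The
subtraction in `s - 1` is not truncated, as the sum starts at `s = 1`. -/
def powSumDeriv {R : Type*} [Semiring R] (n : ℕ) (t : R) : R :=
  ∑ s ∈ Finset.Icc 1 n, (s : R) * t ^ (s - 1)

/-- The function `h_n(t)`: the difference of `powSumDeriv n` and its reversal
`t ^ (2 * n - 1) * g_n(1 / t)`, written without division so that it makes sense in any ring. The
reciprocal feedback signal is `y * h_n(y) / (f_n(y) - f_n(x)) ^ 2`. -/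
def powSumDerivGap {R : Type*} [Ring R] (n : ℕ) (t : R) : R :=
  ∑ s ∈ Finset.Icc 1 n, (s : R) * (t ^ (s - 1) - t ^ (2 * n - s))

section CommRing

variable {R : Type*} [CommRing R]

theorem sub_sq_mul_sum_natCast_mul_pow_mul_pow (n : ℕ) (a b : R) :
    (b - a) ^ 2 * ∑ s ∈ Finset.Icc 1 n, (s : R) * a ^ (s - 1) * b ^ (n - s)
      = b ^ (n + 1) - (n + 1) * a ^ n * b + n * a ^ (n + 1) := by
  induction n with
  | zero => simp
  | succ n ih =>
    have hsucc : ∑ s ∈ Finset.Icc 1 n, (s : R) * a ^ (s - 1) * b ^ (n + 1 - s)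
        = b * ∑ s ∈ Finset.Icc 1 n, (s : R) * a ^ (s - 1) * b ^ (n - s) := by
      rw [Finset.mul_sum]
      refine Finset.sum_congr rfl fun s hs => ?_
      rw [Nat.sub_add_comm (Finset.mem_Icc.1 hs).2, pow_succ']
      ring
    rw [Finset.sum_Icc_succ_top (by lia), hsucc, mul_add, mul_left_comm, ih]
    simp only [Nat.add_sub_cancel, Nat.sub_self, pow_zero]
    push_cast
    ring

theorem one_sub_sq_mul_powSumDeriv (n : ℕ) (t : R) :
    (1 - t) ^ 2 * powSumDeriv n t = 1 - (n + 1) * t ^ n + n * t ^ (n + 1) := by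
  simpa [powSumDeriv] using sub_sq_mul_sum_natCast_mul_pow_mul_pow n t 1

theorem one_sub_sq_mul_sum_natCast_mul_pow_sub (n : ℕ) (t : R) :
    (1 - t) ^ 2 * ∑ s ∈ Finset.Icc 1 n, (s : R) * t ^ (n - s)
      = n - (n + 1) * t + t ^ (n + 1) := by
  have h := sub_sq_mul_sum_natCast_mul_pow_mul_pow n 1 t
  simp only [one_pow, mul_one] at h
  linear_combination h

theorem powSumDerivGap_eq_sub (n : ℕ) (t : R) :
    powSumDerivGap n t
      = powSumDeriv n t - t ^ n * ∑ s ∈ Finset.Icc 1 n, (s : R) * t ^ (n - s) := by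
  rw [powSumDerivGap, powSumDeriv, Finset.mul_sum, ← Finset.sum_sub_distrib]
  refine Finset.sum_congr rfl fun s hs => ?_
  rw [two_mul, Nat.add_sub_assoc (Finset.mem_Icc.1 hs).2, pow_add]
  ring

theorem one_sub_sq_mul_powSumDerivGap (n : ℕ) (t : R) :
    (1 - t) ^ 2 * powSumDerivGap n t
      = 1 - (2 * n + 1) * t ^ n + (2 * n + 1) * t ^ (n + 1) - t ^ (2 * n + 1) := by
  rw [powSumDerivGap_eq_sub]
  linear_combination one_sub_sq_mul_powSumDeriv n t
    - t ^ n * one_sub_sq_mul_sum_natCast_mul_pow_sub n t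

end CommRing

section LinearOrder

variable {R : Type*} [LinearOrder R] {x y : R}

theorem abs_powSum_sub_powSum_le [CommRing R] [IsOrderedRing R] (n : ℕ) (hxy : |x| ≤ y) :
    |powSum n y - powSum n x| ≤ powSumDeriv n y * |y - x| := by
  have hmax : max |y| |x| = y := by
    rw [abs_of_nonneg ((abs_nonneg x).trans hxy), max_eq_left hxy]
  rw [powSum, powSum, powSumDeriv, ← Finset.sum_sub_distrib, Finset.sum_mul]
  refine (Finset.abs_sum_le_sum_abs _ _).trans (Finset.sum_le_sum fun s _ => ?_)
  calc |y ^ s - x ^ s| ≤ |y - x| * s * max |y| |x| ^ (s - 1) := abs_pow_sub_pow_le y x s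
    _ = s * y ^ (s - 1) * |y - x| := by rw [hmax]; ring

theorem sq_powSum_sub_powSum_le [CommRing R] [IsOrderedRing R] (n : ℕ) (hxy : |x| ≤ y) :
    (powSum n y - powSum n x) ^ 2 ≤ powSumDeriv n y ^ 2 * (y - x) ^ 2 := by
  rw [← sq_abs (powSum n y - powSum n x), ← sq_abs (y - x), ← mul_pow]
  exact pow_le_pow_left₀ (abs_nonneg _) (abs_powSum_sub_powSum_le n hxy) 2

theorem powSum_lt_powSum [Ring R] [IsStrictOrderedRing R] {n : ℕ} (hn : 1 ≤ n) (hxy : |x| < y) :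
    powSum n x < powSum n y := by
  refine Finset.sum_lt_sum_of_nonempty (Finset.nonempty_Icc.2 hn) fun s hs => ?_
  have hs0 : s ≠ 0 := Nat.one_le_iff_ne_zero.1 (Finset.mem_Icc.1 hs).1
  calc x ^ s ≤ |x| ^ s := (le_abs_self _).trans_eq (abs_pow x s)
    _ < y ^ s := pow_lt_pow_left₀ hxy (abs_nonneg x) hs0

end LinearOrder

theorem be_reciprocal_signal_ge_general {K : Type*} [Field K] [LinearOrder K]
    [IsStrictOrderedRing K] {n : ℕ} (hn : 1 ≤ n) {x y : K} (hxy : |x| < y) (hy : y ≠ 1)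
    (hcond : powSumDeriv n y ^ 2 / (4 * n * y) ≤ powSumDerivGap n y) :
    1 / (4 * n * (y - x) ^ 2)
      ≤ y * (1 - (2 * n + 1) * y ^ n + (2 * n + 1) * y ^ (n + 1) - y ^ (2 * n + 1))
        / ((1 - y) ^ 2 * (powSum n y - powSum n x) ^ 2) := by
  have : (0 : K) < n := Nat.cast_pos.2 hn
  have hy_pos : 0 < y := (abs_nonneg x).trans_lt hxy
  have hyx : 0 < y - x := sub_pos.2 ((le_abs_self x).trans_lt hxy)
  have hf : 0 < powSum n y - powSum n x := sub_pos.2 (powSum_lt_powSum hn hxy)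
  have hg : powSumDeriv n y ^ 2 ≤ powSumDerivGap n y * (4 * n * y) :=
    (div_le_iff₀ (by positivity)).1 hcond
  have hsq : (powSum n y - powSum n x) ^ 2 ≤ y * powSumDerivGap n y * (4 * n * (y - x) ^ 2) :=
    calc (powSum n y - powSum n x) ^ 2
        ≤ powSumDeriv n y ^ 2 * (y - x) ^ 2 := sq_powSum_sub_powSum_le n hxy.le
      _ ≤ powSumDerivGap n y * (4 * n * y) * (y - x) ^ 2 := by gcongr
      _ = y * powSumDerivGap n y * (4 * n * (y - x) ^ 2) := by ring
  rw [← one_sub_sq_mul_powSumDerivGap, mul_left_comm,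
    mul_div_mul_left _ _ (pow_ne_zero 2 (sub_ne_zero.2 hy.symm)),
    div_le_div_iff₀ (by positivity) (by positivity), one_mul]
  exact hsq

/-- If `h_n(y) ≥ g_n(y)^2 / (4ny)` then the (scaled) reciprocal feedback signal of the BE
reward dominates the reciprocal feedback-signal lower bound of the BD reward:
`y·(1 − (2n+1)y^n + (2n+1)y^{n+1} − y^{2n+1}) / ((1−y)^2 (f_n(y) − f_n(x))^2) ≥ 1/(4n(y−x)^2)`,
where `f_n(t) = Σ_{s=1}^n t^s`, `g_n(t) = Σ_{s=1}^n s t^{s−1}`,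
`h_n(t) = Σ_{s=1}^n s (t^{s−1} − t^{2n−s})`. -/
theorem be_reciprocal_signal_ge (n : ℕ) (hn : 1 ≤ n) (x y : ℝ)
    (hx : 0 < x) (hxy : x < y) (hy : y < 1)
    (hcond : ∑ s ∈ Finset.Icc 1 n, (s : ℝ) * (y ^ (s - 1) - y ^ (2 * n - s))
      ≥ (∑ s ∈ Finset.Icc 1 n, (s : ℝ) * y ^ (s - 1)) ^ 2 / (4 * (n : ℝ) * y)) :
    y * (1 - (2 * (n : ℝ) + 1) * y ^ n + (2 * (n : ℝ) + 1) * y ^ (n + 1) - y ^ (2 * n + 1))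
        / ((1 - y) ^ 2 * ((∑ s ∈ Finset.Icc 1 n, y ^ s) - ∑ s ∈ Finset.Icc 1 n, x ^ s) ^ 2)
      ≥ 1 / (4 * (n : ℝ) * (y - x) ^ 2) := by
  exact be_reciprocal_signal_ge_general hn (by rwa [abs_of_pos hx]) hy.ne hcond
end

section
/- For every α with 0.06 < α < 0.8, the inequality h_5(α) ≥ g_5(α)^2 / (20·α) holds, where g_5(α) = Σ_{s=1}^{5} s·α^{s−1} = 1 + 2α + 3α^2 + 4α^3 + 5α^4 and h_5(α) = Σ_{s=1}^{5} s·(α^{s−1} − α^{10−s}). -/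
/-!
After clearing the denominator the claim is `0 ≤ 20 α h₅(α) - g₅(α)²`, a polynomial in `α` whose
coefficients change sign twice: only the constant term `-1` and the terms of degree at least `6`
are negative. Once the constant term is absorbed, a single sign change from `+` to `-` remains, and
dividing such a polynomial by the power of `α` where the change happens makes it antitone, so it is
enough to evaluate it at the right end of the interval. For `α ≤ 1/2` the constant term is absorbed
by `16 α + 12 α²`, and for `α ≥ 1/2` by `2 α`.
-/

theorem sum_mul_pow_nonneg_of_sign_change {R : Type*} [CommRing R] [LinearOrder R]
    [IsStrictOrderedRing R] {n : ℕ} (c : Fin n → R) (k : ℕ) {x b : R}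
    (hlow : ∀ i : Fin n, i < k → 0 ≤ c i) (hhigh : ∀ i : Fin n, k < i → c i ≤ 0)
    (hx : 0 ≤ x) (hxb : x ≤ b) (hb : 0 ≤ ∑ i, c i * b ^ (i : ℕ)) :
    0 ≤ ∑ i, c i * x ^ (i : ℕ) := by
  obtain rfl | hxb := hxb.eq_or_lt
  · exact hb
  have hb_pos : 0 < b := hx.trans_lt hxb
  have pow_mul_pow_le {i j : ℕ} (hij : i ≤ j) : x ^ j * b ^ i ≤ b ^ j * x ^ i := by
    obtain ⟨d, rfl⟩ := Nat.exists_eq_add_of_le hij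
    calc x ^ (i + d) * b ^ i = x ^ d * (x ^ i * b ^ i) := by ring
      _ ≤ b ^ d * (x ^ i * b ^ i) := by gcongr
      _ = b ^ (i + d) * x ^ i := by ring
  have term_le (i : Fin n) : x ^ k * (c i * b ^ (i : ℕ)) ≤ b ^ k * (c i * x ^ (i : ℕ)) := by
    rw [mul_left_comm, mul_left_comm (b ^ k)]
    rcases lt_trichotomy (i : ℕ) k with hi | hi | hi
    · exact mul_le_mul_of_nonneg_left (pow_mul_pow_le hi.le) (hlow i hi)
    · rw [hi, mul_comm (x ^ k)]
    · refine mul_le_mul_of_nonpos_left ?_ (hhigh i hi)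
      linarith [pow_mul_pow_le hi.le]
  refine nonneg_of_mul_nonneg_right ?_ (pow_pos hb_pos k)
  calc 0 ≤ x ^ k * ∑ i, c i * b ^ (i : ℕ) := mul_nonneg (pow_nonneg hx k) hb
    _ ≤ b ^ k * ∑ i, c i * x ^ (i : ℕ) := by
      simp only [Finset.mul_sum]
      exact Finset.sum_le_sum fun i _ ↦ term_le i

/-- The difference `20 t h₅(t) - g₅(t)²` of the two sides of the inequality after clearing the
denominator, in expanded form so that the signs of its coefficients can be read off. -/
noncomputable def clearedGap (t : ℝ) : ℝ :=
  -1 + 16 * t + 30 * t ^ 2 + 40 * t ^ 3 + 45 * t ^ 4 + 56 * t ^ 5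
    - 146 * t ^ 6 - 120 * t ^ 7 - 85 * t ^ 8 - 40 * t ^ 9 - 20 * t ^ 10

theorem h5_mul_sub_g5_sq_eq_clearedGap (t : ℝ) :
    (∑ s ∈ Finset.Icc (1:ℕ) 5, (s : ℝ) * (t ^ (s - 1) - t ^ (10 - s))) * (20 * t)
      - (∑ s ∈ Finset.Icc (1:ℕ) 5, (s : ℝ) * t ^ (s - 1)) ^ 2 = clearedGap t := by
  simp only [Finset.sum_Icc_succ_top, Finset.Icc_self, Finset.sum_singleton, Nat.reduceAdd,
    Nat.reduceSub, Nat.one_le_ofNat, Nat.cast_one, Nat.cast_ofNat, clearedGap]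
  ring

theorem clearedGap_nonneg_of_le_half {t : ℝ} (ht : 0.06 ≤ t) (ht' : t ≤ 1 / 2) :
    0 ≤ clearedGap t := by
  have ht_nonneg : 0 ≤ t := le_trans (by norm_num) ht
  have low_nonneg : 0 ≤ -1 + 16 * t + 12 * t ^ 2 :=
    calc (0 : ℝ) ≤ -1 + 16 * 0.06 + 12 * 0.06 ^ 2 := by norm_num
      _ ≤ -1 + 16 * t + 12 * t ^ 2 := by gcongr
  have high_nonneg :
      0 ≤ ∑ i : Fin 9, ![18, 40, 45, 56, -146, -120, -85, -40, -20] i * t ^ (i : ℕ) :=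
    sum_mul_pow_nonneg_of_sign_change _ 3 (by simp [Fin.forall_fin_succ])
      (by simp [Fin.forall_fin_succ]) ht_nonneg ht' (by norm_num [Fin.sum_univ_succ])
  calc 0 ≤ (-1 + 16 * t + 12 * t ^ 2) + t ^ 2 * _ :=
        add_nonneg low_nonneg (mul_nonneg (sq_nonneg t) high_nonneg)
    _ = clearedGap t := by
      simp only [Fin.sum_univ_succ, Fin.sum_univ_zero, Matrix.cons_val_zero, Matrix.cons_val_succ,
        Fin.val_zero, Fin.val_succ, clearedGap]
      ring

theorem clearedGap_nonneg_of_half_le {t : ℝ} (ht : 1 / 2 ≤ t) (ht' : t ≤ 0.8) :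
    0 ≤ clearedGap t := by
  have ht_nonneg : 0 ≤ t := le_trans (by norm_num) ht
  have rest_nonneg :
      0 ≤ ∑ i : Fin 10, ![14, 30, 40, 45, 56, -146, -120, -85, -40, -20] i * t ^ (i : ℕ) :=
    sum_mul_pow_nonneg_of_sign_change _ 4 (by simp [Fin.forall_fin_succ])
      (by simp [Fin.forall_fin_succ]) ht_nonneg ht' (by norm_num [Fin.sum_univ_succ])
  calc 0 ≤ (2 * t - 1) + t * _ :=
        add_nonneg (by linarith) (mul_nonneg ht_nonneg rest_nonneg)
    _ = clearedGap t := by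
      simp only [Fin.sum_univ_succ, Fin.sum_univ_zero, Matrix.cons_val_zero, Matrix.cons_val_succ,
        Fin.val_zero, Fin.val_succ, clearedGap]
      ring

theorem clearedGap_nonneg {t : ℝ} (ht : 0.06 ≤ t) (ht' : t ≤ 0.8) : 0 ≤ clearedGap t :=
  (le_total t (1 / 2)).elim (clearedGap_nonneg_of_le_half ht)
    fun h ↦ clearedGap_nonneg_of_half_le h ht'

/-- For `0.06 < α < 0.8` one has `h₅(α) ≥ g₅(α)^2 / (20 α)`, where
`g₅(α) = Σ_{s=1}^5 s α^{s−1}` and `h₅(α) = Σ_{s=1}^5 s (α^{s−1} − α^{10−s})`. -/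
theorem h5_ge_g5_sq_div (α : ℝ) (h1 : 0.06 < α) (h2 : α < 0.8) :
    ∑ s ∈ Finset.Icc (1:ℕ) 5, (s : ℝ) * (α ^ (s - 1) - α ^ (10 - s))
      ≥ (∑ s ∈ Finset.Icc (1:ℕ) 5, (s : ℝ) * α ^ (s - 1)) ^ 2 / (20 * α) := by
  have hα : 0 < α := lt_trans (by norm_num) h1
  rw [ge_iff_le, div_le_iff₀ (mul_pos (by norm_num) hα), ← sub_nonneg,
    h5_mul_sub_g5_sq_eq_clearedGap]
  exact clearedGap_nonneg h1.le h2.le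
end
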